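/- arXiv:0905.1587 — 2 statements merged into one kernel-verified Lean document; each statement's English description precedes it below -/
import Mathlib

section
/- Let k ≥ 2. Every resolution tree of an unsatisfiable weakly linear k-CNF formula has at least 2^{2^{k/2 − 1}} leaves. -/
abbrev Var := ℕ
abbrev Lit := Var × Bool
abbrev Clause := Finset Lit
abbrev CNF := Finset Clause

/-- A clause is valid if it does not contain a variable together with its negation. -/
def Clause.valid (C : Clause) : Prop := ∀ x : Var, ¬(((x, true) ∈ C) ∧ ((x, false) ∈ C))

/-- The set of variables of a clause. -/
def vbl (C : Clause) : Finset Var := C.image Prod.fst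

/-- A `k`-CNF formula: every clause is valid and has exactly `k` literals. -/
def IsKCNF (k : ℕ) (F : CNF) : Prop := ∀ C ∈ F, Clause.valid C ∧ C.card = k

/-- A CNF formula is linear if any two distinct clauses share at most one variable. -/
def LinearCNF (F : CNF) : Prop := ∀ C ∈ F, ∀ D ∈ F, C ≠ D → (vbl C ∩ vbl D).card ≤ 1

/-- A CNF formula is weakly linear if any two distinct clauses share at most one literal. -/
def WeaklyLinear (F : CNF) : Prop := ∀ C ∈ F, ∀ D ∈ F, C ≠ D → (C ∩ D).card ≤ 1

/-- An assignment satisfies a formula if every clause contains a true literal. -/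
def Satisfies (α : Var → Bool) (F : CNF) : Prop := ∀ C ∈ F, ∃ l ∈ C, α l.1 = l.2

def Unsat (F : CNF) : Prop := ¬ ∃ α, Satisfies α F
/-- Resolution trees: leaves carry a clause, internal nodes carry the resolved
literal and the resolvent clause. -/
inductive RTree where
  | leaf : Clause → RTree
  | node : Lit → Clause → RTree → RTree → RTree

/-- The clause labeling the root of the tree. -/
def RTree.clause : RTree → Clause
  | .leaf C => C
  | .node _ C _ _ => C

/-- `R` is the resolvent of `C` and `D`, resolving on the (unique) literal `u`
with `u ∈ C` and `¬u ∈ D`. -/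
def Resolvent (u : Lit) (C D R : Clause) : Prop :=
  u ∈ C ∧ (u.1, !u.2) ∈ D ∧
  (∀ v ∈ C, (v.1, !v.2) ∈ D → v = u) ∧
  R = C.erase u ∪ D.erase (u.1, !u.2)

/-- `t` is a resolution tree from clauses of `F`: leaves are labeled by clauses
of `F`, and each internal node is labeled by the resolvent of its children. -/
def IsResTree (F : CNF) : RTree → Prop
  | .leaf C => C ∈ F
  | .node u C t1 t2 => IsResTree F t1 ∧ IsResTree F t2 ∧
      Resolvent u (RTree.clause t1) (RTree.clause t2) C

def RTree.leafCount : RTree → ℕ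
  | .leaf _ => 1
  | .node _ _ t1 t2 => t1.leafCount + t2.leafCount

/-- The list of clauses labeling the leaves. -/
def RTree.leaves : RTree → List Clause
  | .leaf C => [C]
  | .node _ _ t1 t2 => t1.leaves ++ t2.leaves

/-!
A resolution tree whose root clause is falsified by a partial assignment branches at every step into
two extensions of that assignment, until some clause of `F` is falsified. Write `A` for the set of
falsified literals, and let a clause not yet satisfied and with `j ≥ 2` falsified literals weigh
`2 ^ j`. Branching on `u` preserves the average weight of such a clause; the only increase of the
average comes from clauses reaching two falsified literals. A clause doing so contains `u` (or its
negation) together with an element of `A`, and weak linearity leaves at most `A.card` of these for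
each of the two literals. So after `n` branchings from the empty assignment the average total
weight is at most `4 * n.choose 2`, while falsifying a clause of size `k` requires weight `2 ^ k`.
A subtree reached with total weight `p` has at least `4 * (1 - p / 2 ^ k)` leaves, because `p` is at
least `2 ^ k` when the assignment falsifies a clause, and at least half of that when one more
literal does. For `n` just below `2 ^ (k / 2 - 1)` the average of `p` is at most `2 ^ k / 2`, which
gives at least `2 ^ n * 4 / 2` leaves.
-/

/-- The complementary literal. -/
def Lit.neg (u : Lit) : Lit := (u.1, !u.2)

theorem Lit.neg_neg (u : Lit) : u.neg.neg = u := by simp [Lit.neg]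

theorem Lit.neg_ne (u : Lit) : u.neg ≠ u := by simp [Lit.neg, Prod.ext_iff]

namespace Clause

theorem valid_iff_neg_notMem {A : Clause} : A.valid ↔ ∀ u ∈ A, u.neg ∉ A := by
  constructor
  · rintro hA ⟨x, _ | _⟩ hu hneg
    · exact hA x ⟨hneg, hu⟩
    · exact hA x ⟨hu, hneg⟩
  · rintro hA x ⟨htrue, hfalse⟩
    exact hA _ htrue hfalse

theorem valid.insert {A : Clause} (hA : A.valid) {u : Lit} (hu : u.neg ∉ A) :
    Clause.valid (insert u A) := by
  rw [valid_iff_neg_notMem] at hA ⊢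
  intro v hv hneg
  rcases Finset.mem_insert.mp hv with rfl | hvA <;>
    rcases Finset.mem_insert.mp hneg with hvu | hnegA
  · exact v.neg_ne hvu
  · exact hu hnegA
  · exact hu (hvu ▸ v.neg_neg.symm ▸ hvA)
  · exact hA v hvA hnegA

/-- The weight of `C` under the partial assignment falsifying exactly the literals in `A`: it is
`2 ^ j` if `C` has `j ≥ 2` falsified literals and no satisfied one, and `0` otherwise. The cutoff at
two makes every weight vanish under the empty assignment. -/
def weight (C A : Clause) : ℕ :=
  if 2 ≤ (C ∩ A).card ∧ ∀ l ∈ C, l.neg ∉ A then 2 ^ (C ∩ A).card else 0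

theorem weight_empty_right (C : Clause) : C.weight ∅ = 0 := by simp [weight]

theorem weight_eq_two_pow {A B C : Clause} (hB : B.valid) (hCB : C ⊆ B) (hAB : A ⊆ B)
    (hcard : 2 ≤ (C ∩ A).card) : C.weight A = 2 ^ (C ∩ A).card :=
  if_pos ⟨hcard, fun l hl hneg => valid_iff_neg_notMem.mp hB l (hCB hl) (hAB hneg)⟩

theorem weight_insert_eq_zero {C : Clause} (A : Clause) {u : Lit} (hu : u.neg ∈ C) :
    C.weight (insert u A) = 0 :=
  if_neg fun h => h.2 _ hu (by rw [u.neg_neg]; exact Finset.mem_insert_self u A)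

theorem weight_insert_le_of_notMem {C : Clause} (A : Clause) {u : Lit} (hu : u ∉ C) :
    C.weight (insert u A) ≤ C.weight A := by
  unfold weight
  rw [Finset.inter_insert_of_notMem hu]
  split_ifs with hins hA
  · exact le_rfl
  · exact absurd ⟨hins.1, fun l hl hneg => hins.2 l hl (Finset.mem_insert_of_mem hneg)⟩ hA
  · exact Nat.zero_le _
  · exact le_rfl

theorem weight_insert_le (C A : Clause) (u : Lit) :
    C.weight (insert u A) ≤
      2 * C.weight A + 4 * (if u ∈ C ∧ (C ∩ A).Nonempty then 1 else 0) := by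
  by_cases hu : u ∈ C
  swap
  · have := weight_insert_le_of_notMem A hu
    omega
  by_cases hins : 2 ≤ (C ∩ insert u A).card ∧ ∀ l ∈ C, l.neg ∉ insert u A
  swap
  · exact (if_neg hins).trans_le (Nat.zero_le _)
  have hle : (C ∩ insert u A).card ≤ (C ∩ A).card + 1 := by
    rw [Finset.inter_insert_of_mem hu]
    exact Finset.card_insert_le _ _
  rw [weight, if_pos hins]
  by_cases hcard : 2 ≤ (C ∩ A).card
  · have hA : C.weight A = 2 ^ (C ∩ A).card :=
      if_pos ⟨hcard, fun l hl hneg => hins.2 l hl (Finset.mem_insert_of_mem hneg)⟩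
    calc 2 ^ (C ∩ insert u A).card ≤ 2 ^ ((C ∩ A).card + 1) := Nat.pow_le_pow_right two_pos hle
      _ = 2 * C.weight A := by rw [hA, pow_succ']
      _ ≤ _ := Nat.le_add_right _ _
  · have htwo : (C ∩ insert u A).card = 2 := by omega
    rw [htwo, if_pos ⟨hu, Finset.card_pos.mp (by omega)⟩]
    omega

theorem weight_insert_add_weight_insert_neg_le (C A : Clause) (u : Lit) :
    C.weight (insert u A) + C.weight (insert u.neg A) ≤
      2 * C.weight A + 4 * ((if u ∈ C ∧ (C ∩ A).Nonempty then 1 else 0) +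
        (if u.neg ∈ C ∧ (C ∩ A).Nonempty then 1 else 0)) := by
  have hu := weight_insert_le C A u
  have hneg := weight_insert_le C A u.neg
  by_cases hmem : u ∈ C
  · have hzero : C.weight (insert u.neg A) = 0 :=
      weight_insert_eq_zero A (by rwa [u.neg_neg])
    omega
  by_cases hmem_neg : u.neg ∈ C
  · have hzero : C.weight (insert u A) = 0 := weight_insert_eq_zero A hmem_neg
    omega
  have := weight_insert_le_of_notMem A hmem
  have := weight_insert_le_of_notMem A hmem_neg
  omega

end Clause

namespace WeaklyLinear

theorem card_filter_mem_and_mem_le_one {F : CNF} (hF : WeaklyLinear F) {u v : Lit} (huv : u ≠ v) :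
    (F.filter fun C => u ∈ C ∧ v ∈ C).card ≤ 1 := by
  rw [Finset.card_le_one]
  simp only [Finset.mem_filter]
  rintro C ⟨hC, huC, hvC⟩ D ⟨hD, huD, hvD⟩
  by_contra hCD
  exact huv (Finset.card_le_one.mp (hF C hC D hD hCD) u (Finset.mem_inter.mpr ⟨huC, huD⟩)
    v (Finset.mem_inter.mpr ⟨hvC, hvD⟩))

theorem card_filter_mem_and_inter_nonempty_le {F : CNF} (hF : WeaklyLinear F) {A : Clause}
    {u : Lit} (hu : u ∉ A) : (F.filter fun C => u ∈ C ∧ (C ∩ A).Nonempty).card ≤ A.card := by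
  have hcover : (F.filter fun C => u ∈ C ∧ (C ∩ A).Nonempty) ⊆
      A.biUnion fun v => F.filter fun C => u ∈ C ∧ v ∈ C := by
    intro C hC
    obtain ⟨hCF, huC, v, hv⟩ := Finset.mem_filter.mp hC
    obtain ⟨hvC, hvA⟩ := Finset.mem_inter.mp hv
    exact Finset.mem_biUnion.mpr ⟨v, hvA, Finset.mem_filter.mpr ⟨hCF, huC, hvC⟩⟩
  calc _ ≤ _ := Finset.card_le_card hcover
    _ ≤ A.card * 1 := Finset.card_biUnion_le_card_mul A _ 1 fun v hv =>
      hF.card_filter_mem_and_mem_le_one (ne_of_mem_of_not_mem hv hu).symm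
    _ = A.card := mul_one _

end WeaklyLinear

namespace CNF

/-- The total weight of the clauses of `F` under the partial assignment falsifying the literals in
`A`; it measures how close the assignment is to falsifying a clause of `F`. -/
def potential (F : CNF) (A : Clause) : ℕ := ∑ C ∈ F, C.weight A

theorem potential_empty_right (F : CNF) : F.potential ∅ = 0 :=
  Finset.sum_eq_zero fun C _ => C.weight_empty_right

theorem weight_le_potential {F : CNF} {C : Clause} (hC : C ∈ F) (A : Clause) :
    C.weight A ≤ F.potential A :=
  Finset.single_le_sum (f := fun D : Clause => D.weight A) (fun _ _ => Nat.zero_le _) hC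

theorem two_pow_card_le_potential {F : CNF} {A C : Clause} (hC : C ∈ F) (hcard : 2 ≤ C.card)
    (hA : A.valid) (hCA : C ⊆ A) : 2 ^ C.card ≤ F.potential A := by
  have hinter : C ∩ A = C := Finset.inter_eq_left.mpr hCA
  have hweight : C.weight A = 2 ^ (C ∩ A).card :=
    Clause.weight_eq_two_pow hA hCA subset_rfl (by rwa [hinter])
  rw [hinter] at hweight
  exact hweight ▸ weight_le_potential hC A

theorem two_pow_card_le_two_mul_potential {F : CNF} {A C : Clause} (hC : C ∈ F)
    (hcard : 3 ≤ C.card) {u : Lit} (hA : Clause.valid (insert u A)) (hCA : C ⊆ insert u A) :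
    2 ^ C.card ≤ 2 * F.potential A := by
  have hle : C.card ≤ (C ∩ A).card + 1 :=
    calc C.card = (C ∩ insert u A).card := by rw [Finset.inter_eq_left.mpr hCA]
      _ ≤ (insert u (C ∩ A)).card := by
        rw [Finset.insert_inter_distrib]
        exact Finset.card_le_card (Finset.inter_subset_inter_right (Finset.subset_insert u C))
      _ ≤ (C ∩ A).card + 1 := Finset.card_insert_le _ _
  have hweight : C.weight A = 2 ^ (C ∩ A).card :=
    Clause.weight_eq_two_pow hA hCA (Finset.subset_insert u A) (by omega)
  calc 2 ^ C.card ≤ 2 ^ ((C ∩ A).card + 1) := Nat.pow_le_pow_right two_pos hle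
    _ = 2 * C.weight A := by rw [hweight, pow_succ']
    _ ≤ 2 * F.potential A := Nat.mul_le_mul_left 2 (weight_le_potential hC A)

theorem potential_insert_add_potential_insert_neg_le {F : CNF} (hF : WeaklyLinear F) {A : Clause}
    {u : Lit} (hu : u ∉ A) (hneg : u.neg ∉ A) :
    F.potential (insert u A) + F.potential (insert u.neg A) ≤
      2 * F.potential A + 8 * A.card := by
  have hsum := Finset.sum_le_sum fun C (_ : C ∈ F) =>
    C.weight_insert_add_weight_insert_neg_le A u
  simp only [Finset.sum_add_distrib, ← Finset.mul_sum, Finset.sum_boole, Nat.cast_id] at hsum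
  have hcard := hF.card_filter_mem_and_inter_nonempty_le hu
  have hcard_neg := hF.card_filter_mem_and_inter_nonempty_le hneg
  unfold potential
  omega

end CNF

theorem RTree.leafCount_pos : ∀ t : RTree, 0 < t.leafCount
  | .leaf _ => Nat.one_pos
  | .node _ _ t₁ _ => Nat.add_pos_left t₁.leafCount_pos _

namespace Resolvent

theorem left_subset_insert {u : Lit} {A C D R : Clause} (h : Resolvent u C D R) (hRA : R ⊆ A) :
    C ⊆ insert u A := by
  obtain ⟨-, -, -, rfl⟩ := h
  exact Finset.subset_insert_iff.mpr (Finset.subset_union_left.trans hRA)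

theorem right_subset_insert_neg {u : Lit} {A C D R : Clause} (h : Resolvent u C D R)
    (hRA : R ⊆ A) : D ⊆ insert u.neg A := by
  obtain ⟨-, -, -, rfl⟩ := h
  exact Finset.subset_insert_iff.mpr (Finset.subset_union_right.trans hRA)

end Resolvent

namespace IsResTree

variable {F : CNF} {A : Clause} {k : ℕ} {t : RTree}

theorem clause_mem_of_leafCount_lt_two (ht : IsResTree F t) (hleaf : t.leafCount < 2) :
    t.clause ∈ F := by
  cases t with
  | leaf C => exact ht
  | node u R t₁ t₂ =>
    have := t₁.leafCount_pos
    have := t₂.leafCount_pos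
    rw [RTree.leafCount] at hleaf
    omega

-- Nodes resolving on a literal already assigned by `A` are skipped by descending to the child
-- whose clause `A` still falsifies.
theorem exists_subset_or_exists_branch (ht : IsResTree F t) (htA : t.clause ⊆ A) :
    (∃ C ∈ F, C ⊆ A) ∨
      ∃ (u : Lit) (t₁ t₂ : RTree), u ∉ A ∧ u.neg ∉ A ∧ IsResTree F t₁ ∧ IsResTree F t₂ ∧
        t₁.clause ⊆ insert u A ∧ t₂.clause ⊆ insert u.neg A ∧
        t₁.leafCount + t₂.leafCount ≤ t.leafCount := by
  induction t with
  | leaf C => exact .inl ⟨C, ht, htA⟩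
  | node u R t₁ t₂ ih₁ ih₂ =>
    obtain ⟨ht₁, ht₂, hres⟩ := ht
    have hsub₁ : t₁.clause ⊆ insert u A := hres.left_subset_insert htA
    have hsub₂ : t₂.clause ⊆ insert u.neg A := hres.right_subset_insert_neg htA
    by_cases hu : u ∈ A
    · rw [Finset.insert_eq_of_mem hu] at hsub₁
      refine (ih₁ ht₁ hsub₁).imp_right fun ⟨v, s₁, s₂, hv, hv', hs₁, hs₂, hsA₁, hsA₂, hle⟩ => ?_
      exact ⟨v, s₁, s₂, hv, hv', hs₁, hs₂, hsA₁, hsA₂, hle.trans (Nat.le_add_right _ _)⟩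
    by_cases hneg : u.neg ∈ A
    · rw [Finset.insert_eq_of_mem hneg] at hsub₂
      refine (ih₂ ht₂ hsub₂).imp_right fun ⟨v, s₁, s₂, hv, hv', hs₁, hs₂, hsA₁, hsA₂, hle⟩ => ?_
      exact ⟨v, s₁, s₂, hv, hv', hs₁, hs₂, hsA₁, hsA₂, hle.trans (Nat.le_add_left _ _)⟩
    exact .inr ⟨u, t₁, t₂, hu, hneg, ht₁, ht₂, hsub₁, hsub₂, le_rfl⟩

theorem two_pow_le_two_mul_potential_or_two_le_leafCount (hk : 3 ≤ k)
    (hcard : ∀ C ∈ F, k ≤ C.card) (ht : IsResTree F t) {u : Lit}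
    (hA : Clause.valid (insert u A)) (htA : t.clause ⊆ insert u A) :
    2 ^ k ≤ 2 * F.potential A ∨ 2 ≤ t.leafCount := by
  refine or_iff_not_imp_right.mpr fun hleaf => ?_
  have hmem : t.clause ∈ F := ht.clause_mem_of_leafCount_lt_two (not_le.mp hleaf)
  exact (Nat.pow_le_pow_right two_pos (hcard _ hmem)).trans
    (CNF.two_pow_card_le_two_mul_potential hmem (hk.trans (hcard _ hmem)) hA htA)

theorem four_mul_two_pow_le_leafCount_add_potential (hk : 3 ≤ k)
    (hcard : ∀ C ∈ F, k ≤ C.card) (ht : IsResTree F t) (hA : A.valid) (htA : t.clause ⊆ A) :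
    4 * 2 ^ k ≤ 2 ^ k * t.leafCount + 4 * F.potential A := by
  rcases ht.exists_subset_or_exists_branch htA with
    ⟨C, hC, hCA⟩ | ⟨u, t₁, t₂, hu, hneg, ht₁, ht₂, hsub₁, hsub₂, hle⟩
  · have hpot : 2 ^ C.card ≤ F.potential A :=
      CNF.two_pow_card_le_potential hC (by have := hcard C hC; omega) hA hCA
    have := Nat.pow_le_pow_right two_pos (hcard C hC)
    omega
  have hA₁ : Clause.valid (insert u A) := hA.insert hneg
  have hA₂ : Clause.valid (insert u.neg A) := hA.insert (by rwa [u.neg_neg])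
  by_cases hpot : 2 ^ k ≤ 2 * F.potential A
  · have htwo : 2 ≤ t.leafCount :=
      (Nat.add_le_add t₁.leafCount_pos t₂.leafCount_pos).trans hle
    have := Nat.mul_le_mul_left (2 ^ k) htwo
    omega
  · have hleaf₁ : 2 ≤ t₁.leafCount :=
      (two_pow_le_two_mul_potential_or_two_le_leafCount hk hcard ht₁ hA₁ hsub₁).resolve_left hpot
    have hleaf₂ : 2 ≤ t₂.leafCount :=
      (two_pow_le_two_mul_potential_or_two_le_leafCount hk hcard ht₂ hA₂ hsub₂).resolve_left hpot
    have hfour : 4 ≤ t.leafCount := (Nat.add_le_add hleaf₁ hleaf₂).trans hle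
    have := Nat.mul_le_mul_left (2 ^ k) hfour
    omega

-- This is `2 ^ n * (4 * (1 - p / 2 ^ k)) ≤ t.leafCount` without subtraction and division, where `p`
-- bounds the average potential after `n` branchings starting from `A`.
theorem two_pow_mul_two_pow_le_leafCount_add_potential (hk : 3 ≤ k)
    (hcard : ∀ C ∈ F, k ≤ C.card) (hF : WeaklyLinear F) (n : ℕ) (ht : IsResTree F t)
    (hA : A.valid) (htA : t.clause ⊆ A) :
    2 ^ (n + 2) * 2 ^ k ≤
      2 ^ k * t.leafCount + 2 ^ (n + 2) * (F.potential A + 4 * (n * A.card + n.choose 2)) := by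
  induction n generalizing A t with
  | zero => simpa using ht.four_mul_two_pow_le_leafCount_add_potential hk hcard hA htA
  | succ n ih =>
    rcases ht.exists_subset_or_exists_branch htA with
      ⟨C, hC, hCA⟩ | ⟨u, t₁, t₂, hu, hneg, ht₁, ht₂, hsub₁, hsub₂, hle⟩
    · have hpot : 2 ^ k ≤ F.potential A :=
        (Nat.pow_le_pow_right two_pos (hcard C hC)).trans
          (CNF.two_pow_card_le_potential hC (by have := hcard C hC; omega) hA hCA)
      calc 2 ^ (n + 1 + 2) * 2 ^ k
          ≤ 2 ^ (n + 1 + 2) * (F.potential A + 4 * ((n + 1) * A.card + (n + 1).choose 2)) :=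
            Nat.mul_le_mul_left _ (hpot.trans (Nat.le_add_right _ _))
        _ ≤ _ := Nat.le_add_left _ _
    · have ih₁ := ih ht₁ (hA.insert hneg) hsub₁
      have ih₂ := ih ht₂ (hA.insert (by rwa [u.neg_neg])) hsub₂
      rw [Finset.card_insert_of_notMem hu] at ih₁
      rw [Finset.card_insert_of_notMem hneg] at ih₂
      have hleaf := Nat.mul_le_mul_left (2 ^ k) hle
      have hpot := Nat.mul_le_mul_left (2 ^ (n + 2))
        (CNF.potential_insert_add_potential_insert_neg_le hF hu hneg)
      have hchoose : (n + 1).choose 2 = n + n.choose 2 := by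
        rw [Nat.choose_succ_succ', Nat.choose_one_right]
      rw [hchoose, show 2 ^ (n + 1 + 2) = 2 * 2 ^ (n + 2) by ring]
      linarith

theorem two_pow_succ_le_leafCount (hk : 1 ≤ k) (hcard : ∀ C ∈ F, k ≤ C.card)
    (hF : WeaklyLinear F) (ht : IsResTree F t) (hroot : t.clause = ∅) {n : ℕ}
    (hn : (2 * n) ^ 2 < 2 ^ k) : 2 ^ (n + 1) ≤ t.leafCount := by
  rcases Nat.lt_or_ge k 3 with hk_small | hk_large
  · have hzero : n = 0 := by
      have : 2 ^ k ≤ 2 ^ 2 := Nat.pow_le_pow_right two_pos (by omega)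
      nlinarith
    subst hzero
    by_contra! hleaf
    have hempty := hcard _ (ht.clause_mem_of_leafCount_lt_two hleaf)
    rw [hroot, Finset.card_empty] at hempty
    omega
  · have hempty_valid : Clause.valid ∅ := by simp [Clause.valid]
    have hbound := ht.two_pow_mul_two_pow_le_leafCount_add_potential hk_large hcard hF n
      hempty_valid hroot.subset
    rw [CNF.potential_empty_right, Finset.card_empty, mul_zero, zero_add, zero_add] at hbound
    have hchoose : 2 * (4 * n.choose 2) ≤ 2 ^ k := by
      have hdiv : n.choose 2 * 2 ≤ n * (n - 1) :=
        n.choose_two_right ▸ Nat.div_mul_le_self _ _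
      have hsq : n * (n - 1) ≤ n * n := Nat.mul_le_mul_left n (Nat.sub_le n 1)
      nlinarith
    have hscaled := Nat.mul_le_mul_left (2 ^ (n + 1)) hchoose
    refine Nat.le_of_mul_le_mul_left ?_ (Nat.two_pow_pos k)
    rw [pow_succ 2 (n + 1)] at hbound
    linarith

end IsResTree

theorem exists_two_mul_sq_lt_two_pow_and_rpow_le_add_one (k : ℕ) :
    ∃ n : ℕ, (2 * n) ^ 2 < 2 ^ k ∧ (2 : ℝ) ^ ((k : ℝ) / 2 - 1) ≤ n + 1 := by
  set s : ℝ := (2 : ℝ) ^ ((k : ℝ) / 2 - 1) with hs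
  have hs_pos : 0 < s := by positivity
  have hs_sq : (2 * s) ^ 2 = 2 ^ k := by
    have htwo : 2 * s = 2 ^ ((k : ℝ) / 2) := by
      rw [hs, Real.rpow_sub_one two_ne_zero, mul_div_cancel₀ _ two_ne_zero]
    rw [htwo, ← Real.rpow_mul_natCast zero_le_two, Nat.cast_ofNat, div_mul_cancel₀ _ two_ne_zero,
      Real.rpow_natCast]
  obtain ⟨n, hn⟩ := Nat.exists_eq_succ_of_ne_zero (Nat.ceil_pos.mpr hs_pos).ne'
  refine ⟨n, ?_, ?_⟩
  · have hlt : (n : ℝ) < s := Nat.lt_ceil.mp (by omega)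
    have hsq : (2 * (n : ℝ)) ^ 2 < 2 ^ k := by
      rw [← hs_sq]
      gcongr
    exact_mod_cast hsq
  · exact_mod_cast hn ▸ Nat.le_ceil s

theorem stmt11_general {k : ℕ} (hk : 1 ≤ k) {F : CNF} (hcard : ∀ C ∈ F, k ≤ C.card)
    (hF : WeaklyLinear F) {t : RTree} (ht : IsResTree F t) (hroot : t.clause = ∅) :
    (2 : ℝ) ^ ((2 : ℝ) ^ ((k : ℝ) / 2 - 1)) ≤ (t.leafCount : ℝ) := by
  obtain ⟨n, hn, hle⟩ := exists_two_mul_sq_lt_two_pow_and_rpow_le_add_one k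
  calc (2 : ℝ) ^ ((2 : ℝ) ^ ((k : ℝ) / 2 - 1)) ≤ 2 ^ ((n : ℝ) + 1) :=
        Real.rpow_le_rpow_of_exponent_le one_le_two hle
    _ = ((2 ^ (n + 1) : ℕ) : ℝ) := by exact_mod_cast Real.rpow_natCast 2 (n + 1)
    _ ≤ t.leafCount := by exact_mod_cast ht.two_pow_succ_le_leafCount hk hcard hF hroot hn

/-- Every resolution tree of an unsatisfiable weakly linear `k`-CNF formula
(`k ≥ 2`) has at least `2^{2^{k/2 - 1}}` leaves. -/
theorem stmt11 (k : ℕ) (hk : 2 ≤ k) (F : CNF) (hF : IsKCNF k F)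
    (hw : WeaklyLinear F) (hunsat : Unsat F)
    (t : RTree) (ht : IsResTree F t) (hroot : t.clause = ∅) :
    (2 : ℝ) ^ ((2 : ℝ) ^ ((k : ℝ) / 2 - 1)) ≤ (t.leafCount : ℝ) :=
  stmt11_general (one_le_two.trans hk) (fun C hC => (hF C hC).2.ge) hw ht hroot
end

section
/- Every strictly treelike weakly linear k-CNF formula has at least 2^{ν_1 θ_1} clauses, where the parameters are defined for a fixed 1 ≤ ℓ ≤ k by θ_ℓ = ⌊(k−ℓ+1)/2⌋ − 1, ν_ℓ = 1, and inductively θ_i = ⌊2^{ν_{i+1}θ_{i+1}−2}/θ_{i+1}⌋ − 1 and ν_i = ((ν_{i+1}θ_{i+1}−1)/θ_i)·⌊θ_i/θ_{i+1}⌋ for 1 ≤ i < ℓ. -/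
/-- The parameters `(θ_i, ν_i)` of the tower bound, indexed by the distance
`j = ℓ - i` from `ℓ`: `par k ℓ j = (θ_{ℓ-j}, ν_{ℓ-j})`, with
`θ_ℓ = ⌊(k-ℓ+1)/2⌋ - 1`, `ν_ℓ = 1`,
`θ_i = ⌊2^{ν_{i+1}θ_{i+1}-2}/θ_{i+1}⌋ - 1` and
`ν_i = ((ν_{i+1}θ_{i+1}-1)/θ_i)·⌊θ_i/θ_{i+1}⌋`. -/
noncomputable def par (k l : ℕ) : ℕ → ℕ × ℝ
  | 0 => ((k - l + 1) / 2 - 1, 1)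
  | j + 1 =>
      let p := par k l j
      let t' := Nat.floor ((2 : ℝ) ^ (p.2 * (p.1 : ℝ) - 2) / (p.1 : ℝ)) - 1
      (t', (p.2 * (p.1 : ℝ) - 1) / (t' : ℝ) * ((t' / p.1 : ℕ) : ℝ))

/-!
Follow the paths of the tree downwards from the root and call a leaf clause below a node heavy at
level `i` if it contains at least `i` of the literals on the path to that node. The invariant
(extendability) says that at every level the heavy clauses are few and are all hit by few literals
of the path. A node whose leaf clauses all miss `θ` literals of the path starts a complete binary
tree of depth `θ`, which settles the top level `ℓ`. Passing from level `i + 1` to level `i`, one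
concatenates `⌊θ_i / θ_{i+1}⌋` rounds of such growth; after each round every descendant with a leaf
clause that was already heavy is discarded, which loses at most half of them. A clause that becomes
heavy in the round contains a new literal of the round and a second literal from a set of size
`2 θ_i`, and by weak linearity such a pair determines the clause. Hence there are at most
`2 θ_i θ_{i+1}` such clauses, and the recursion for `θ_i` makes this at most half of
`2 ^ (ν_{i+1} θ_{i+1})`.
-/

section

open scoped Finset

section FinsetCard

variable {ι α : Type*} [DecidableEq α]

theorem card_inter_le_card_inter_add_card_inter_sdiff (D L M : Finset α) :
    #(D ∩ M) ≤ #(D ∩ L) + #(D ∩ (M \ L)) := by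
  refine (Finset.card_le_card fun x hx => ?_).trans (Finset.card_union_le _ _)
  simp only [Finset.mem_inter, Finset.mem_union, Finset.mem_sdiff] at hx ⊢
  tauto

theorem card_sdiff_le_card_sdiff_add_card_sdiff (L M P : Finset α) :
    #(P \ L) ≤ #(M \ L) + #(P \ M) := by
  refine (Finset.card_le_card fun x hx => ?_).trans (Finset.card_union_le _ _)
  simp only [Finset.mem_union, Finset.mem_sdiff] at hx ⊢
  tauto

theorem exists_mem_sdiff_of_card_inter_lt {D L M : Finset α} (h : #(D ∩ L) < #(D ∩ M)) :
    ∃ x ∈ M \ L, x ∈ D := by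
  obtain ⟨x, hxM, hxL⟩ := Finset.exists_mem_notMem_of_card_lt_card h
  simp only [Finset.mem_inter, not_and] at hxM hxL
  exact ⟨x, Finset.mem_sdiff.2 ⟨hxM.2, hxL hxM.1⟩, hxM.1⟩

theorem card_le_card_filter_disjoint_add_card {s : Finset ι} {f : ι → Finset α}
    (hs : (s : Set ι).PairwiseDisjoint f) (B : Finset α) :
    #s ≤ #{i ∈ s | Disjoint (f i) B} + #B := by
  have hmeet : #{i ∈ s | ¬ Disjoint (f i) B} ≤ #B := by
    refine (Finset.card_le_card_biUnion (f := fun i => f i ∩ B) ?_ ?_).trans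
      (Finset.card_le_card (Finset.biUnion_subset.2 fun _ _ => Finset.inter_subset_right))
    · exact (hs.subset (Finset.coe_subset.2 (Finset.filter_subset _ _))).mono
        fun _ => Finset.inter_subset_left
    · exact fun i hi => Finset.not_disjoint_iff_nonempty_inter.1 (Finset.mem_filter.1 hi).2
  rw [← Finset.card_filter_add_card_filter_not (s := s) fun i => Disjoint (f i) B]
  exact Nat.add_le_add_left hmeet _

theorem card_le_mul_card_of_card_inter_le_one {S : Finset (Finset α)} {P Q : Finset α}
    (hS : ∀ C ∈ S, ∀ D ∈ S, C ≠ D → #(C ∩ D) ≤ 1)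
    (h : ∀ D ∈ S, ∃ y ∈ P, ∃ x ∈ Q, y ≠ x ∧ y ∈ D ∧ x ∈ D) :
    #S ≤ #P * #Q := by
  rw [← Finset.card_product]
  refine Finset.card_le_card_of_forall_subsingleton
    (fun D z => z.1 ≠ z.2 ∧ z.1 ∈ D ∧ z.2 ∈ D) (fun D hD => ?_) ?_
  · obtain ⟨y, hy, x, hx, hyx⟩ := h D hD
    exact ⟨(y, x), Finset.mem_product.2 ⟨hy, hx⟩, hyx⟩
  · rintro ⟨y, x⟩ - C ⟨hC, hne, hyC, hxC⟩ D ⟨hD, -, hyD, hxD⟩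
    by_contra hCD
    refine (hS C hC D hD hCD).not_gt (Finset.one_lt_card.2 ⟨y, ?_, x, ?_, hne⟩)
    exacts [Finset.mem_inter.2 ⟨hyC, hyD⟩, Finset.mem_inter.2 ⟨hxC, hxD⟩]

end FinsetCard

theorem RTree.leaves_ne_nil (t : RTree) : t.leaves ≠ [] := by
  induction t with
  | leaf C => simp [RTree.leaves]
  | node _ _ t₁ t₂ ih₁ _ => simp [RTree.leaves, ih₁]

theorem IsResTree.mem_of_mem_leaves {F : CNF} {t : RTree} (ht : IsResTree F t) {D : Clause}
    (hD : D ∈ t.leaves) : D ∈ F := by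
  induction t with
  | leaf C =>
    rw [RTree.leaves, List.mem_singleton] at hD
    exact hD ▸ ht
  | node _ _ t₁ t₂ ih₁ ih₂ =>
    rcases List.mem_append.1 hD with hD | hD
    exacts [ih₁ ht.1 hD, ih₂ ht.2.1 hD]

/-- A node of a resolution tree, encoded as the subtree hanging there together with the set of
literals resolved on along the path from the root. -/
structure PathNode where
  path : Finset Lit
  tree : RTree

namespace PathNode

/-- The clauses labeling the leaves below a node. -/
def clauses (v : PathNode) : Finset Clause := v.tree.leaves.toFinset

theorem clauses_nonempty (v : PathNode) : v.clauses.Nonempty :=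
  List.toFinset_nonempty_iff _ |>.2 v.tree.leaves_ne_nil

/-- The conditions satisfied by the nodes of a strict resolution tree that derives the empty clause
from `F`: the subtree is a strict resolution tree, and its clause consists of literals of the
path. -/
structure IsNode (F : CNF) (v : PathNode) : Prop where
  isResTree : IsResTree F v.tree
  clause_subset : v.tree.clause ⊆ v.path
  nodup : v.tree.leaves.Nodup

/-- `w` lies below `v` and its path has at most `d` literals that the path of `v` lacks. -/
structure IsDescendant (d : ℕ) (v w : PathNode) : Prop where
  path_subset : v.path ⊆ w.path
  card_sdiff_le : #(w.path \ v.path) ≤ d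
  clauses_subset : w.clauses ⊆ v.clauses

/-- A front of depth `d` below `v`: a set of pairwise incomparable descendants of `v`.
Incomparability is expressed by disjointness of the sets of leaf clauses, which is equivalent in a
strict tree. -/
structure IsFront (F : CNF) (v : PathNode) (d : ℕ) (A : Finset PathNode) : Prop where
  isNode : ∀ w ∈ A, w.IsNode F
  isDescendant : ∀ w ∈ A, IsDescendant d v w
  pairwiseDisjoint : (A : Set PathNode).PairwiseDisjoint clauses

variable {F : CNF} {v w x : PathNode} {d e : ℕ} {A : Finset PathNode}

theorem IsNode.clauses_subset (hv : v.IsNode F) : v.clauses ⊆ F :=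
  fun _ hD => hv.isResTree.mem_of_mem_leaves (List.mem_toFinset.1 hD)

theorem isDescendant_self (v : PathNode) : IsDescendant 0 v v :=
  ⟨subset_rfl, by simp, subset_rfl⟩

theorem IsDescendant.trans (hvw : IsDescendant d v w) (hwx : IsDescendant e w x) :
    IsDescendant (d + e) v x where
  path_subset := hvw.path_subset.trans hwx.path_subset
  card_sdiff_le := (card_sdiff_le_card_sdiff_add_card_sdiff _ _ _).trans
    (Nat.add_le_add hvw.card_sdiff_le hwx.card_sdiff_le)
  clauses_subset := hwx.clauses_subset.trans hvw.clauses_subset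

theorem IsDescendant.mono (h : IsDescendant d v w) (hde : d ≤ e) : IsDescendant e v w :=
  ⟨h.path_subset, h.card_sdiff_le.trans hde, h.clauses_subset⟩

theorem IsFront.mono (hA : IsFront F v d A) (hde : d ≤ e) : IsFront F v e A :=
  ⟨hA.isNode, fun w hw => (hA.isDescendant w hw).mono hde, hA.pairwiseDisjoint⟩

theorem IsFront.subset {B : Finset PathNode} (hA : IsFront F v d A) (hBA : B ⊆ A) :
    IsFront F v d B :=
  ⟨fun w hw => hA.isNode w (hBA hw), fun w hw => hA.isDescendant w (hBA hw),
    hA.pairwiseDisjoint.subset (Finset.coe_subset.2 hBA)⟩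

theorem IsNode.isFront_singleton (hv : v.IsNode F) : IsFront F v 0 {v} where
  isNode w hw := Finset.mem_singleton.1 hw ▸ hv
  isDescendant w hw := Finset.mem_singleton.1 hw ▸ v.isDescendant_self
  pairwiseDisjoint := by
    rw [Finset.coe_singleton]
    exact Set.pairwiseDisjoint_singleton v clauses

theorem IsFront.card_le (hA : IsFront F v d A) : #A ≤ #v.clauses :=
  (Finset.card_le_card_biUnion hA.pairwiseDisjoint fun w _ => w.clauses_nonempty).trans
    (Finset.card_le_card
      (Finset.biUnion_subset.2 fun w hw => (hA.isDescendant w hw).clauses_subset))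

theorem IsFront.exists_bind {c : ℝ} {P : PathNode → Prop} (hA : IsFront F v d A)
    (h : ∀ w ∈ A, ∃ B, IsFront F w e B ∧ c ≤ #B ∧ ∀ x ∈ B, P x) :
    ∃ B, IsFront F v (d + e) B ∧ #A * c ≤ #B ∧ ∀ x ∈ B, P x := by
  classical
  choose! g hg hcard hP using h
  have hdisj : ∀ w ∈ A, ∀ w' ∈ A, w ≠ w' → ∀ x ∈ g w, ∀ x' ∈ g w', Disjoint x.clauses x'.clauses :=
    fun w hw w' hw' hne x hx x' hx' => (hA.pairwiseDisjoint hw hw' hne).mono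
      ((hg w hw).isDescendant x hx).clauses_subset ((hg w' hw').isDescendant x' hx').clauses_subset
  have hgdisj : (A : Set PathNode).PairwiseDisjoint g := fun w hw w' hw' hne =>
    Finset.disjoint_left.2 fun x hx hx' =>
      x.clauses_nonempty.ne_empty (disjoint_self.1 (hdisj w hw w' hw' hne x hx x hx'))
  refine ⟨A.biUnion g, ⟨?_, ?_, ?_⟩, ?_, ?_⟩
  · simp only [Finset.mem_biUnion]
    exact fun x ⟨w, hw, hx⟩ => (hg w hw).isNode x hx
  · simp only [Finset.mem_biUnion]
    exact fun x ⟨w, hw, hx⟩ => (hA.isDescendant w hw).trans ((hg w hw).isDescendant x hx)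
  · rintro x hx x' hx' hne
    obtain ⟨w, hw, hx⟩ := Finset.mem_biUnion.1 hx
    obtain ⟨w', hw', hx'⟩ := Finset.mem_biUnion.1 hx'
    obtain rfl | hww' := eq_or_ne w w'
    exacts [(hg w hw).pairwiseDisjoint hx hx' hne, hdisj w hw w' hw' hww' x hx x' hx']
  · rw [Finset.card_biUnion hgdisj, Nat.cast_sum, ← nsmul_eq_mul]
    exact Finset.card_nsmul_le_sum A _ c hcard
  · simp only [Finset.mem_biUnion]
    exact fun x ⟨w, hw, hx⟩ => hP w hw x hx

theorem IsNode.exists_iterate_front {c : ℝ} {P : PathNode → Prop} (hv : v.IsNode F) (hPv : P v)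
    (hc : 0 ≤ c) (n : ℕ)
    (hstep : ∀ i < n, ∀ w, w.IsNode F → IsDescendant (i * e) v w → P w →
      ∃ B, IsFront F w e B ∧ c ≤ #B ∧ ∀ x ∈ B, P x) :
    ∃ A, IsFront F v (n * e) A ∧ c ^ n ≤ #A ∧ ∀ w ∈ A, P w := by
  induction n with
  | zero => exact ⟨{v}, by simpa only [zero_mul] using hv.isFront_singleton, by simp, by simpa⟩
  | succ n ih =>
    obtain ⟨A, hA, hcard, hP⟩ := ih fun i hi => hstep i (hi.trans n.lt_succ_self)
    obtain ⟨B, hB, hAB, hPB⟩ := hA.exists_bind fun w hw =>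
      hstep n n.lt_succ_self w (hA.isNode w hw) (hA.isDescendant w hw) (hP w hw)
    refine ⟨B, by rwa [Nat.succ_mul], ?_, hPB⟩
    rw [pow_succ]
    exact (mul_le_mul_of_nonneg_right hcard hc).trans hAB

theorem isNode_insert {L : Finset Lit} {t : RTree} {u : Lit} (ht : IsResTree F t)
    (hnodup : t.leaves.Nodup) (hL : t.clause.erase u ⊆ L) : IsNode F ⟨insert u L, t⟩ :=
  ⟨ht, Finset.subset_insert_iff.2 hL, hnodup⟩

theorem isDescendant_insert (L : Finset Lit) (u : Lit) {t t' : RTree} (h : t.leaves ⊆ t'.leaves) :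
    IsDescendant 1 ⟨L, t'⟩ ⟨insert u L, t⟩ where
  path_subset := Finset.subset_insert u L
  card_sdiff_le := by
    rw [Finset.card_sdiff_of_subset (Finset.subset_insert u L)]
    exact Nat.sub_le_iff_le_add'.2 (Finset.card_insert_le u L)
  clauses_subset _ hD := List.mem_toFinset.2 (h (List.mem_toFinset.1 hD))

theorem IsNode.exists_front_one (hv : v.IsNode F) (h : ∀ D ∈ v.clauses, ¬ D ⊆ v.path) :
    ∃ A, IsFront F v 1 A ∧ #A = 2 := by
  classical
  obtain ⟨L, t⟩ := v
  cases t with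
  | leaf C => exact absurd hv.clause_subset (h C (by simp [clauses, RTree.leaves]))
  | node u C t₁ t₂ =>
    obtain ⟨⟨ht₁, ht₂, -, -, -, rfl⟩, hsub, hnodup⟩ := hv
    obtain ⟨hL₁, hL₂⟩ := Finset.union_subset_iff.1 hsub
    have hdisj : Disjoint (clauses ⟨insert u L, t₁⟩) (clauses ⟨insert (u.1, !u.2) L, t₂⟩) :=
      List.disjoint_toFinset_iff_disjoint.2 (List.disjoint_of_nodup_append hnodup)
    refine ⟨{⟨insert u L, t₁⟩, ⟨insert (u.1, !u.2) L, t₂⟩}, ⟨?_, ?_, ?_⟩, ?_⟩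
    · simpa using ⟨isNode_insert ht₁ (List.Nodup.of_append_left hnodup) hL₁,
        isNode_insert ht₂ (List.Nodup.of_append_right hnodup) hL₂⟩
    · simpa using ⟨isDescendant_insert L u (List.subset_append_left _ _),
        isDescendant_insert L _ (List.subset_append_right _ _)⟩
    · rw [Finset.coe_pair]
      exact Set.pairwise_pair.2 fun _ => ⟨hdisj, hdisj.symm⟩
    · exact Finset.card_pair fun heq =>
        (clauses_nonempty _).ne_empty (disjoint_self.1 (heq ▸ hdisj))

theorem IsNode.exists_front_two_pow (hv : v.IsNode F) {n : ℕ}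
    (h : ∀ D ∈ v.clauses, n ≤ #(D \ v.path)) :
    ∃ A, IsFront F v n A ∧ 2 ^ n ≤ #A := by
  obtain ⟨A, hA, hcard, -⟩ := hv.exists_iterate_front (e := 1) (c := 2) (P := fun _ => True)
    trivial zero_le_two n fun i hi w hw hvw _ => by
      obtain ⟨B, hB, hcard⟩ := hw.exists_front_one fun D hD hDw => by
        have hle := Finset.card_le_card (Finset.sdiff_subset_sdiff hDw (subset_refl v.path))
        have := h D (hvw.clauses_subset hD)
        have := hvw.card_sdiff_le
        omega
      exact ⟨B, hB, by rw [hcard, Nat.cast_two], fun _ _ => trivial⟩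
  exact ⟨A, by rwa [mul_one] at hA, by exact_mod_cast hcard⟩

/-- The leaf clauses below `v` that contain at least `j` literals of the path to `v`. -/
def heavy (v : PathNode) (j : ℕ) : Finset Clause := {D ∈ v.clauses | j ≤ #(D ∩ v.path)}

/-- `Q` hits every clause that is heavy at level `j`. -/
def CoversHeavy (v : PathNode) (j : ℕ) (Q : Finset Lit) : Prop :=
  ∀ D ∈ v.heavy j, ∃ x ∈ Q, x ∈ D

theorem coversHeavy_sdiff {j : ℕ} (hwv : w.clauses ⊆ v.clauses)
    (h : Disjoint w.clauses (v.heavy j)) : w.CoversHeavy j (w.path \ v.path) := by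
  intro D hD
  obtain ⟨hDw, hj⟩ := Finset.mem_filter.1 hD
  have hDv : ¬ j ≤ #(D ∩ v.path) := fun hle =>
    Finset.disjoint_left.1 h hDw (Finset.mem_filter.2 ⟨hwv hDw, hle⟩)
  exact exists_mem_sdiff_of_card_inter_lt ((not_le.1 hDv).trans_le hj)

-- Besides its literal in `P`, a clause heavy at level `j + 1` below `w` has one in
-- `Q ∪ (w.path \ v.path)`: either it is heavy at level `j` for `v`, or it has gained two literals.
theorem card_heavy_succ_le {j : ℕ} {P Q : Finset Lit} (hF : WeaklyLinear F) (hw : w.IsNode F)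
    (hwv : w.clauses ⊆ v.clauses) (hQ : v.CoversHeavy j Q) (hP : w.CoversHeavy (j + 1) P)
    (hPQ : Disjoint P Q) :
    #(w.heavy (j + 1)) ≤ #P * (#Q + #(w.path \ v.path)) := by
  have hwF : w.heavy (j + 1) ⊆ F := (Finset.filter_subset _ _).trans hw.clauses_subset
  refine (card_le_mul_card_of_card_inter_le_one (Q := Q ∪ w.path \ v.path)
    (fun C hC D hD => hF C (hwF hC) D (hwF hD)) fun D hD => ?_).trans
    (Nat.mul_le_mul_left _ (Finset.card_union_le _ _))
  obtain ⟨y, hyP, hyD⟩ := hP D hD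
  obtain ⟨hDw, hjw⟩ := Finset.mem_filter.1 hD
  refine ⟨y, hyP, ?_⟩
  by_cases hDv : j ≤ #(D ∩ v.path)
  · obtain ⟨x, hxQ, hxD⟩ := hQ D (Finset.mem_filter.2 ⟨hwv hDw, hDv⟩)
    exact ⟨x, Finset.mem_union_left _ hxQ, Finset.disjoint_iff_ne.1 hPQ y hyP x hxQ, hyD, hxD⟩
  · have hgain : 1 < #(D ∩ (w.path \ v.path)) := by
      have := card_inter_le_card_inter_add_card_inter_sdiff D v.path w.path
      omega
    obtain ⟨x, hx, hxy⟩ := Finset.exists_mem_ne hgain y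
    obtain ⟨hxD, hxw⟩ := Finset.mem_inter.1 hx
    exact ⟨x, Finset.mem_union_right _ hxw, hxy.symm, hyD, hxD⟩

/-- The heavy clauses at level `j` number at most `b` and are hit by at most `q` literals of the
path. -/
structure IsControlled (j q : ℕ) (b : ℝ) (v : PathNode) : Prop where
  exists_cover : ∃ Q ⊆ v.path, #Q ≤ q ∧ v.CoversHeavy j Q
  card_le : #(v.heavy j) ≤ b

/-- Extendability of a node, the invariant of the growth argument. As for `par`, the index `a`
stands for the level `l - a`; the top `m` levels are controlled. -/
structure IsExtendable (l : ℕ) (θ : ℕ → ℕ) (N : ℕ → ℝ) (m : ℕ) (v : PathNode) : Prop where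
  card_inter_lt : ∀ D ∈ v.clauses, #(D ∩ v.path) < l + θ 0
  isControlled : ∀ a < m, v.IsControlled (l - a) (θ a) (N a / 2)

end PathNode

/-- The growth conditions on the parameters `θ a` and `N a = 2 ^ (ν θ)` of level `l - a` under
which `N a` bounds the number of clauses from below. -/
structure IsTower (l : ℕ) (θ : ℕ → ℕ) (N : ℕ → ℝ) : Prop where
  nonneg : ∀ a, 0 ≤ N a
  zero_le : N 0 ≤ 2 ^ θ 0
  succ_le : ∀ a, a + 1 < l → N (a + 1) ≤ (N a / 2) ^ (θ (a + 1) / θ a)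
  mul_le : ∀ a, a + 1 < l → (θ a * (2 * θ (a + 1)) : ℝ) ≤ N a / 2

/-- Every node extendable for `m + 1` levels has a front of depth `θ m` with at least `N m` nodes,
each extendable for `m` levels unless one of its leaf clauses was already heavy. -/
def Branches (F : CNF) (l : ℕ) (θ : ℕ → ℕ) (N : ℕ → ℝ) (m : ℕ) : Prop :=
  ∀ v : PathNode, v.IsNode F → v.IsExtendable l θ N (m + 1) →
    ∃ A, v.IsFront F (θ m) A ∧ N m ≤ #A ∧
      ∀ w ∈ A, Disjoint w.clauses (v.heavy (l - m)) → w.IsExtendable l θ N m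

section Growth

open PathNode

variable {F : CNF} {l m : ℕ} {θ : ℕ → ℕ} {N : ℕ → ℝ} {v₀ v w : PathNode}

theorem branches_zero (hF : ∀ C ∈ F, l + 2 * θ 0 ≤ #C + 1) (hN : IsTower l θ N) :
    Branches F l θ N 0 := by
  intro v hv hext
  obtain ⟨A, hA, hcard⟩ := hv.exists_front_two_pow (n := θ 0) fun D hD => by
    have := hext.card_inter_lt D hD
    have := hF D (hv.clauses_subset hD)
    have := Finset.card_sdiff_add_card_inter D v.path
    omega
  refine ⟨A, hA, hN.zero_le.trans (by exact_mod_cast hcard), fun w hw hdisj => ⟨fun D hD => ?_, ?_⟩⟩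
  · have hvw := hA.isDescendant w hw
    have hlight : ¬ l ≤ #(D ∩ v.path) := fun hle =>
      Finset.disjoint_left.1 hdisj hD (Finset.mem_filter.2 ⟨hvw.clauses_subset hD, hle⟩)
    have := card_inter_le_card_inter_add_card_inter_sdiff D v.path w.path
    have := Finset.card_le_card (Finset.inter_subset_right (s₁ := D) (s₂ := w.path \ v.path))
    have := hvw.card_sdiff_le
    omega
  · exact fun a ha => absurd ha a.not_lt_zero

theorem Branches.exists_disjoint_front (h : Branches F l θ N m) (hv : v.IsNode F)
    (hext : v.IsExtendable l θ N (m + 1)) :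
    ∃ A, v.IsFront F (θ m) A ∧ N m / 2 ≤ #A ∧
      ∀ w ∈ A, Disjoint w.clauses (v.heavy (l - m)) ∧ w.IsExtendable l θ N m := by
  obtain ⟨A, hA, hcard, hAext⟩ := h v hv hext
  refine ⟨{w ∈ A | Disjoint w.clauses (v.heavy (l - m))}, hA.subset (Finset.filter_subset _ _),
    ?_, fun w hw => ?_⟩
  · have hkept : (#A : ℝ) ≤ #{w ∈ A | Disjoint w.clauses (v.heavy (l - m))} + #(v.heavy (l - m)) :=
      mod_cast card_le_card_filter_disjoint_add_card hA.pairwiseDisjoint _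
    have := (hext.isControlled m m.lt_succ_self).card_le
    linarith
  · obtain ⟨hwA, hdisj⟩ := Finset.mem_filter.1 hw
    exact ⟨hdisj, hAext w hwA hdisj⟩

theorem PathNode.IsExtendable.succ (hF : WeaklyLinear F) (hN : IsTower l θ N) (hm : m + 1 < l)
    (hv₀ : v₀.IsExtendable l θ N (m + 2)) (hv₀v : v₀.path ⊆ v.path)
    (hvw : IsDescendant (θ m) v w) (hv₀w : IsDescendant (θ (m + 1)) v₀ w) (hw : w.IsNode F)
    (hdisj : Disjoint w.clauses (v.heavy (l - m))) (hext : w.IsExtendable l θ N m) :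
    w.IsExtendable l θ N (m + 1) := by
  refine ⟨hext.card_inter_lt, fun a ha => ?_⟩
  obtain ha | rfl := Nat.lt_succ_iff_lt_or_eq.1 ha
  · exact hext.isControlled a ha
  have hcover : w.CoversHeavy (l - a) (w.path \ v.path) :=
    coversHeavy_sdiff hvw.clauses_subset hdisj
  refine ⟨⟨_, Finset.sdiff_subset, hvw.card_sdiff_le, hcover⟩, ?_⟩
  obtain ⟨Q, hQ, hQcard, hQcover⟩ := (hv₀.isControlled (a + 1) (Nat.lt_succ_self _)).exists_cover
  have hlevel : l - a = l - (a + 1) + 1 := by omega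
  have hcount : #(w.heavy (l - a)) ≤ θ a * (2 * θ (a + 1)) := by
    rw [hlevel] at hcover ⊢
    calc #(w.heavy (l - (a + 1) + 1))
        ≤ #(w.path \ v.path) * (#Q + #(w.path \ v₀.path)) :=
          card_heavy_succ_le hF hw hv₀w.clauses_subset hQcover hcover
            (Finset.sdiff_disjoint.mono_right (hQ.trans hv₀v))
      _ ≤ θ a * (θ (a + 1) + θ (a + 1)) :=
          Nat.mul_le_mul hvw.card_sdiff_le (Nat.add_le_add hQcard hv₀w.card_sdiff_le)
      _ = θ a * (2 * θ (a + 1)) := by rw [two_mul]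
  exact le_trans (mod_cast hcount) (hN.mul_le a hm)

theorem Branches.succ (hF : WeaklyLinear F) (hN : IsTower l θ N) (hm : m + 1 < l)
    (h : Branches F l θ N m) : Branches F l θ N (m + 1) := by
  intro v₀ hv₀ hext₀
  have hrounds : θ (m + 1) / θ m * θ m ≤ θ (m + 1) := Nat.div_mul_le_self _ _
  obtain ⟨A, hA, hcard, hAext⟩ := hv₀.exists_iterate_front (e := θ m) (c := N m / 2)
    (P := IsExtendable l θ N (m + 1))
    ⟨hext₀.card_inter_lt, fun a ha => hext₀.isControlled a (ha.trans (Nat.lt_succ_self _))⟩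
    (div_nonneg (hN.nonneg m) zero_le_two) (θ (m + 1) / θ m) fun i hi v hv hv₀v hext => by
      obtain ⟨B, hB, hcard, hBext⟩ := h.exists_disjoint_front hv hext
      refine ⟨B, hB, hcard, fun w hw => ?_⟩
      have hround : i * θ m + θ m ≤ θ (m + 1) := by
        rw [← Nat.succ_mul]
        exact (Nat.mul_le_mul_right _ hi).trans hrounds
      have hvw := hB.isDescendant w hw
      exact .succ hF hN hm hext₀ hv₀v.path_subset hvw ((hv₀v.trans hvw).mono hround)
        (hB.isNode w hw) (hBext w hw).1 (hBext w hw).2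
  exact ⟨A, hA.mono hrounds, (hN.succ_le m hm).trans hcard, fun w hw _ => hAext w hw⟩

theorem IsTower.branches (hN : IsTower l θ N) (hF : ∀ C ∈ F, l + 2 * θ 0 ≤ #C + 1)
    (hlin : WeaklyLinear F) (hm : m < l) : Branches F l θ N m := by
  induction m with
  | zero => exact branches_zero hF hN
  | succ m ih => exact (ih (m.lt_succ_self.trans hm)).succ hlin hN hm

theorem IsTower.isExtendable_root (hN : IsTower l θ N) (hm : m < l) (t : RTree) :
    IsExtendable l θ N (m + 1) ⟨∅, t⟩ := by
  refine ⟨fun D _ => by rw [Finset.inter_empty, Finset.card_empty]; omega, fun a ha => ?_⟩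
  have hheavy : heavy ⟨∅, t⟩ (l - a) = ∅ := Finset.filter_eq_empty_iff.2 fun D _ => by
    rw [Finset.inter_empty, Finset.card_empty]
    omega
  refine ⟨⟨∅, Finset.Subset.refl _, Nat.zero_le _, ?_⟩, ?_⟩
  · simp [CoversHeavy, hheavy]
  · rw [hheavy, Finset.card_empty, Nat.cast_zero]
    exact div_nonneg (hN.nonneg a) zero_le_two

theorem IsTower.le_card (hN : IsTower l θ N) (hF : ∀ C ∈ F, l + 2 * θ 0 ≤ #C + 1)
    (hlin : WeaklyLinear F) (hm : m < l) {t : RTree} (ht : IsResTree F t) (hroot : t.clause = ∅)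
    (hstrict : t.leaves.Nodup) : N m ≤ #F := by
  have hnode : IsNode F ⟨∅, t⟩ := ⟨ht, hroot.subset, hstrict⟩
  obtain ⟨A, hA, hcard, -⟩ := hN.branches hF hlin hm _ hnode (hN.isExtendable_root hm t)
  exact hcard.trans (mod_cast hA.card_le.trans (Finset.card_le_card hnode.clauses_subset))

end Growth

section Parameters

variable {k l j : ℕ}

/-- The number `2 ^ (ν_i θ_i)` for `i = l - j`. -/
noncomputable def towerBound (k l j : ℕ) : ℝ := 2 ^ ((par k l j).2 * ((par k l j).1 : ℝ))

theorem towerBound_pos (k l j : ℕ) : 0 < towerBound k l j :=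
  Real.rpow_pos_of_pos two_pos _

theorem towerBound_succ (h : 0 < (par k l (j + 1)).1) :
    towerBound k l (j + 1) =
      (towerBound k l j / 2) ^ ((par k l (j + 1)).1 / (par k l j).1) := by
  have hθ : ((par k l (j + 1)).1 : ℝ) ≠ 0 := mod_cast h.ne'
  have hν : (par k l (j + 1)).2 = ((par k l j).2 * (par k l j).1 - 1) / (par k l (j + 1)).1 *
      ((par k l (j + 1)).1 / (par k l j).1 : ℕ) := rfl
  have hhalf : towerBound k l j / 2 = 2 ^ ((par k l j).2 * ((par k l j).1 : ℝ) - 1) := by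
    rw [towerBound, Real.rpow_sub two_pos, Real.rpow_one]
  rw [hhalf, ← Real.rpow_natCast, ← Real.rpow_mul zero_le_two, towerBound, hν]
  congr 1
  field_simp

theorem par_mul_two_mul_par_succ_le (h : 0 < (par k l j).1) :
    ((par k l j).1 * (2 * (par k l (j + 1)).1) : ℝ) ≤ towerBound k l j / 2 := by
  have hθ : (0 : ℝ) < (par k l j).1 := mod_cast h
  have hquarter : (2 : ℝ) ^ ((par k l j).2 * ((par k l j).1 : ℝ) - 2) = towerBound k l j / 4 := by
    rw [towerBound, Real.rpow_sub two_pos]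
    norm_num
  have hfloor : (par k l (j + 1)).1 ≤ ⌊towerBound k l j / 4 / (par k l j).1⌋₊ := by
    rw [← hquarter]
    exact Nat.sub_le _ _
  have hle : ((par k l (j + 1)).1 : ℝ) ≤ towerBound k l j / 4 / (par k l j).1 :=
    (Nat.le_floor_iff (by have := towerBound_pos k l j; positivity)).1 hfloor
  rw [le_div_iff₀ hθ] at hle
  linarith

theorem isTower_par (hpos : ∀ j < l, 0 < (par k l j).1) :
    IsTower l (fun j => (par k l j).1) (towerBound k l) where
  nonneg j := (towerBound_pos k l j).le
  zero_le := by simp [towerBound, par]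
  succ_le j hj := (towerBound_succ (hpos (j + 1) hj)).le
  mul_le j hj := par_mul_two_mul_par_succ_le (hpos j (j.lt_succ_self.trans hj))

end Parameters

theorem stmt17_general (k l : ℕ) (hl : 1 ≤ l) (hpos : ∀ j < l, 0 < (par k l j).1) (F : CNF)
    (hF : ∀ C ∈ F, k ≤ #C) (hw : WeaklyLinear F) (t : RTree) (ht : IsResTree F t)
    (hroot : t.clause = ∅) (hstrict : t.leaves.Nodup) :
    (2 : ℝ) ^ ((par k l (l - 1)).2 * ((par k l (l - 1)).1 : ℝ)) ≤ #F := by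
  have hlong : l + 2 * (par k l 0).1 ≤ k + 1 := by
    have := hpos 0 hl
    simp only [par] at this ⊢
    omega
  exact (isTower_par hpos).le_card (fun C hC => hlong.trans (Nat.succ_le_succ (hF C hC))) hw
    (Nat.sub_one_lt_of_lt hl) ht hroot hstrict

end

/-- Every strictly treelike weakly linear `k`-CNF formula has at least
`2^{ν_1 θ_1}` clauses. -/
theorem stmt17 (k l : ℕ) (hl : 1 ≤ l) (hlk : l ≤ k)
    (hpos : ∀ j, j < l → 0 < (par k l j).1 ∧ 0 < (par k l j).2)
    (F : CNF) (hF : IsKCNF k F) (hw : WeaklyLinear F)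
    (t : RTree) (ht : IsResTree F t) (hroot : t.clause = ∅)
    (hstrict : t.leaves.Nodup) :
    (2 : ℝ) ^ ((par k l (l - 1)).2 * ((par k l (l - 1)).1 : ℝ)) ≤ (F.card : ℝ) := by
  exact stmt17_general k l hl (fun j hj => (hpos j hj).1) F (fun C hC => (hF C hC).2.ge) hw t ht
    hroot hstrict
end
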